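/- arXiv:1910.04472 — 2 statements merged into one kernel-verified Lean document; each statement's English description precedes it below -/
import Mathlib

section
/- (Delsarte) Let q be a prime power and let m ≥ n ≥ d ≥ 1 be integers. Let C ⊆ F_q^{m×n} be an F_q-linear subspace such that every nonzero element of C has rank at least d and |C| = q^{m(n−d+1)} (i.e., C is a linear MRD code with minimum rank distance d). Then for every r with d ≤ r ≤ n, the number of elements of C having rank exactly r equals [n choose r]_q · Σ_{i=0}^{r−d} (−1)^i · q^{i(i−1)/2} · [r choose i]_q · (q^{m(r−d+1−i)} − 1), where [a choose b]_q = ∏_{j=0}^{b−1} (q^{a−j} − 1)/(q^{b−j} − 1) is the Gaussian binomial coefficient. -/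
open Module

/-- The Gaussian binomial coefficient
`[a choose b]_q = ∏_{j=0}^{b−1} (q^{a−j} − 1)/(q^{b−j} − 1)` for `0 ≤ b ≤ a`,
and `0` otherwise. -/
noncomputable def gaussBinom (q : ℚ) (a b : ℕ) : ℚ :=
  if b ≤ a then ∏ j ∈ Finset.range b, (q ^ (a - j) - 1) / (q ^ (b - j) - 1) else 0

section GaussBinom

variable {q : ℚ}

theorem gaussBinom_of_lt {a b : ℕ} (h : a < b) : gaussBinom q a b = 0 :=
  if_neg (by omega)

@[simp]
theorem gaussBinom_zero_right (a : ℕ) : gaussBinom q a 0 = 1 := by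
  simp [gaussBinom]

/-- The product `∏_{j=1}^{n} (q^j − 1)`. -/
def qFactorialProd (q : ℚ) (n : ℕ) : ℚ := ∏ j ∈ Finset.range n, (q ^ (j + 1) - 1)

@[simp]
theorem qFactorialProd_zero : qFactorialProd q 0 = 1 := by
  simp [qFactorialProd]

theorem qFactorialProd_succ (n : ℕ) :
    qFactorialProd q (n + 1) = qFactorialProd q n * (q ^ (n + 1) - 1) :=
  Finset.prod_range_succ _ _

theorem pow_succ_sub_one_ne_zero (hq : 1 < q) (n : ℕ) : q ^ (n + 1) - 1 ≠ 0 :=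
  (sub_pos.2 (one_lt_pow₀ hq n.succ_ne_zero)).ne'

theorem qFactorialProd_ne_zero (hq : 1 < q) (n : ℕ) : qFactorialProd q n ≠ 0 :=
  Finset.prod_ne_zero_iff.2 fun j _ => pow_succ_sub_one_ne_zero hq j

theorem prod_pow_sub_one_mul_qFactorialProd (a b : ℕ) :
    (∏ j ∈ Finset.range b, (q ^ (a + b - j) - 1)) * qFactorialProd q a =
      qFactorialProd q (a + b) := by
  induction b with
  | zero => simp
  | succ b ih =>
    rw [Finset.prod_range_succ', ← add_assoc, qFactorialProd_succ, ← ih]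
    simp only [Nat.add_sub_add_right, Nat.sub_zero]
    ring

theorem gaussBinom_add_right (hq : 1 < q) (a b : ℕ) :
    gaussBinom q (a + b) b =
      qFactorialProd q (a + b) / (qFactorialProd q a * qFactorialProd q b) := by
  have h := prod_pow_sub_one_mul_qFactorialProd (q := q) 0 b
  rw [zero_add, qFactorialProd_zero, mul_one] at h
  rw [gaussBinom, if_pos (Nat.le_add_left b a), Finset.prod_div_distrib,
    ← prod_pow_sub_one_mul_qFactorialProd a b, ← h]
  have ha := qFactorialProd_ne_zero hq a
  rw [mul_comm (qFactorialProd q a), mul_div_mul_right _ _ ha]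

theorem gaussBinom_self (hq : 1 < q) (a : ℕ) : gaussBinom q a a = 1 := by
  simpa [qFactorialProd_ne_zero hq] using gaussBinom_add_right hq 0 a

theorem gaussBinom_succ_succ (hq : 1 < q) (s j : ℕ) :
    gaussBinom q (s + 1) (j + 1) =
      gaussBinom q s j + q ^ (j + 1) * gaussBinom q s (j + 1) := by
  rcases lt_trichotomy s j with h | rfl | h
  · rw [gaussBinom_of_lt h, gaussBinom_of_lt (by omega), gaussBinom_of_lt (by omega)]
    simp
  · rw [gaussBinom_self hq, gaussBinom_self hq, gaussBinom_of_lt (by omega)]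
    simp
  · obtain ⟨a, rfl⟩ := Nat.exists_eq_add_of_le' (Nat.succ_le_of_lt h)
    have h1 := gaussBinom_add_right hq (a + 1) (j + 1)
    have h2 := gaussBinom_add_right hq (a + 1) j
    have h3 := gaussBinom_add_right hq a (j + 1)
    rw [show a + 1 + (j + 1) = a + j + 1 + 1 by ring] at h1
    rw [show a + 1 + j = a + j + 1 by ring] at h2
    rw [show a + (j + 1) = a + j + 1 by ring] at h3
    rw [show a + j.succ = a + j + 1 by rfl, h1, h2, h3]
    simp only [qFactorialProd_succ]
    have e1 := qFactorialProd_ne_zero hq a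
    have e2 := qFactorialProd_ne_zero hq j
    have e3 := pow_succ_sub_one_ne_zero hq a
    have e4 := pow_succ_sub_one_ne_zero hq j
    field_simp
    ring

theorem gaussBinom_mul_gaussBinom (hq : 1 < q) (l i t : ℕ) :
    gaussBinom q (l + i + t) (l + i) * gaussBinom q (l + i) i =
      gaussBinom q (l + i + t) l * gaussBinom q (i + t) i := by
  have h1 := gaussBinom_add_right hq t (l + i)
  have h2 := gaussBinom_add_right hq l i
  have h3 := gaussBinom_add_right hq (i + t) l
  have h4 := gaussBinom_add_right hq t i
  rw [add_comm t] at h1 h4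
  rw [show i + t + l = l + i + t by ring] at h3
  rw [h1, h2, h3, h4]
  have e1 := qFactorialProd_ne_zero hq l
  have e2 := qFactorialProd_ne_zero hq i
  have e3 := qFactorialProd_ne_zero hq t
  have e4 := qFactorialProd_ne_zero hq (l + i)
  have e5 := qFactorialProd_ne_zero hq (i + t)
  field_simp

theorem sum_neg_one_pow_mul_gaussBinom_succ (hq : 1 < q) (s j : ℕ) :
    ∑ i ∈ Finset.range (j + 1), (-1 : ℚ) ^ i * q ^ (i.choose 2) * gaussBinom q (s + 1) i =
      (-1 : ℚ) ^ j * q ^ ((j + 1).choose 2) * gaussBinom q s j := by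
  induction j with
  | zero => simp
  | succ j ih =>
    rw [Finset.sum_range_succ, ih, gaussBinom_succ_succ hq, Nat.choose_succ_succ' (j + 1) 1,
      Nat.choose_one_right, pow_add]
    ring

theorem sum_neg_one_pow_mul_gaussBinom (hq : 1 < q) (s : ℕ) :
    ∑ i ∈ Finset.range (s + 1), (-1 : ℚ) ^ i * q ^ (i.choose 2) * gaussBinom q s i =
      if s = 0 then 1 else 0 := by
  cases s with
  | zero => simp
  | succ s =>
    rw [sum_neg_one_pow_mul_gaussBinom_succ hq, gaussBinom_of_lt (Nat.lt_succ_self s)]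
    simp

/-- The inverse transform of `φ` with respect to Gaussian binomial coefficients. -/
noncomputable def gaussInverse (q : ℚ) (φ : ℕ → ℚ) (r : ℕ) : ℚ :=
  ∑ i ∈ Finset.range (r + 1),
    (-1 : ℚ) ^ i * q ^ (i.choose 2) * gaussBinom q r i * φ (r - i)

theorem sum_gaussBinom_mul_gaussInverse (hq : 1 < q) (φ : ℕ → ℚ) (r : ℕ) :
    ∑ k ∈ Finset.range (r + 1), gaussBinom q r k * gaussInverse q φ k = φ r := by
  have key : ∀ k, gaussBinom q r k * gaussInverse q φ k =
      ∑ p ∈ Finset.HasAntidiagonal.antidiagonal k, gaussBinom q r (p.1 + p.2) *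
        ((-1 : ℚ) ^ p.1 * q ^ (p.1.choose 2) * gaussBinom q (p.1 + p.2) p.1 * φ p.2) := by
    intro k
    rw [gaussInverse, ← Finset.Nat.sum_antidiagonal_eq_sum_range_succ
      (fun i j => (-1 : ℚ) ^ i * q ^ (i.choose 2) * gaussBinom q k i * φ j), Finset.mul_sum]
    refine Finset.sum_congr rfl fun p hp => ?_
    rw [Finset.HasAntidiagonal.mem_antidiagonal.1 hp]
  simp_rw [key]
  rw [Finset.sum_sigma', Finset.sum_bij'
    (t := (Finset.range (r + 1)).sigma fun l => Finset.range (r - l + 1))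
    (g := fun x => gaussBinom q r x.1 * φ x.1 *
      ((-1 : ℚ) ^ x.2 * q ^ (x.2.choose 2) * gaussBinom q (r - x.1) x.2))
    (fun x _ => ⟨x.2.2, x.2.1⟩) (fun x _ => ⟨x.1 + x.2, (x.2, x.1)⟩)]
  · rw [Finset.sum_sigma]
    simp_rw [← Finset.mul_sum, sum_neg_one_pow_mul_gaussBinom hq]
    rw [Finset.sum_eq_single r]
    · simp [gaussBinom_self hq]
    · intro b hb hbr
      rw [if_neg (by have := Finset.mem_range.1 hb; omega), mul_zero]
    · simp
  · rintro ⟨k, i, l⟩ h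
    simp at h ⊢
    omega
  · rintro ⟨l, i⟩ h
    simp at h ⊢
    omega
  · rintro ⟨k, i, l⟩ h
    simp at h ⊢
    omega
  · rintro ⟨l, i⟩ h
    rfl
  · rintro ⟨k, i, l⟩ h
    simp only [Finset.mem_sigma, Finset.mem_range, Finset.HasAntidiagonal.mem_antidiagonal] at h
    obtain ⟨t, rfl⟩ := Nat.exists_eq_add_of_le (show l + i ≤ r by omega)
    have e := gaussBinom_mul_gaussBinom hq l i t
    rw [show l + i + t - l = i + t by omega]
    dsimp only
    rw [add_comm i l]
    linear_combination ((-1 : ℚ) ^ i * q ^ (i.choose 2) * φ l) * e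

end GaussBinom

section Subspaces

variable {F E : Type*} [Field F] [Fintype F] [AddCommGroup E] [Module F E] [Finite E]

theorem natCard_linearIndependent_mem (V : Submodule F E) {k : ℕ} (hk : k ≤ finrank F V) :
    (Nat.card {s : Fin k → E // LinearIndependent F s ∧ ∀ i, s i ∈ V} : ℚ) =
      ∏ i ∈ Finset.range k,
        ((Fintype.card F : ℚ) ^ finrank F V - (Fintype.card F : ℚ) ^ i) := by
  have : Fintype V := Fintype.ofFinite V
  have e : {s : Fin k → V // LinearIndependent F s} ≃
      {s : Fin k → E // LinearIndependent F s ∧ ∀ i, s i ∈ V} :=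
    { toFun := fun s => ⟨fun i => s.1 i, s.2.map' V.subtype V.ker_subtype, fun i => (s.1 i).2⟩
      invFun := fun s => ⟨fun i => ⟨s.1 i, s.2.2 i⟩,
        LinearIndependent.of_comp V.subtype s.2.1⟩
      left_inv := fun _ => rfl
      right_inv := fun _ => rfl }
  rw [← Nat.card_congr e, card_linearIndependent hk, Finset.prod_range, Nat.cast_prod]
  refine Finset.prod_congr rfl fun i _ => ?_
  rw [Nat.cast_sub (Nat.pow_le_pow_right Fintype.card_pos (i.2.le.trans hk))]
  push_cast
  rfl

theorem natCard_submodule_le_finrank_eq (V : Submodule F E) (k : ℕ) :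
    (Nat.card {U : Submodule F E // U ≤ V ∧ finrank F U = k} : ℚ) =
      gaussBinom (Fintype.card F) (finrank F V) k := by
  classical
  have hq : (1 : ℚ) < Fintype.card F := by exact_mod_cast Fintype.one_lt_card
  by_cases hk : k ≤ finrank F V
  swap
  · rw [gaussBinom_of_lt (not_le.1 hk), Nat.cast_eq_zero]
    have : IsEmpty {U : Submodule F E // U ≤ V ∧ finrank F U = k} :=
      ⟨fun U => hk (U.2.2 ▸ Submodule.finrank_mono U.2.1)⟩
    exact Nat.card_of_isEmpty
  have hspan : ∀ s : Fin k → E, LinearIndependent F s →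
      finrank F (Submodule.span F (Set.range s)) = k := fun s hs => by
    simpa using finrank_span_eq_card hs
  let f : {s : Fin k → E // LinearIndependent F s ∧ ∀ i, s i ∈ V} →
      {U : Submodule F E // U ≤ V ∧ finrank F U = k} := fun s =>
    ⟨Submodule.span F (Set.range s.1),
      Submodule.span_le.2 (Set.range_subset_iff.2 s.2.2), hspan s.1 s.2.1⟩
  have hfib : ∀ U : {U : Submodule F E // U ≤ V ∧ finrank F U = k},
      (Nat.card {s // f s = U} : ℚ) = ∏ i ∈ Finset.range k,
        ((Fintype.card F : ℚ) ^ k - (Fintype.card F : ℚ) ^ i) := by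
    intro U
    have h := natCard_linearIndependent_mem U.1 (k := k) U.2.2.ge
    rw [U.2.2] at h
    rw [← h, Nat.cast_inj]
    refine Nat.card_congr
      { toFun := fun s => ⟨s.1.1, s.1.2.1, fun i => ?_⟩
        invFun := fun s => ⟨⟨s.1, s.2.1, fun i => U.2.1 (s.2.2 i)⟩, ?_⟩
        left_inv := fun _ => rfl
        right_inv := fun _ => rfl }
    · have h1 := congrArg Subtype.val s.2
      rw [← h1]
      exact Submodule.subset_span ⟨i, rfl⟩
    · refine Subtype.ext (Submodule.eq_of_le_of_finrank_eq
        (Submodule.span_le.2 (Set.range_subset_iff.2 s.2.2)) ?_)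
      exact (hspan s.1 s.2.1).trans U.2.2.symm
  have htot := natCard_linearIndependent_mem V hk
  have : Fintype {U : Submodule F E // U ≤ V ∧ finrank F U = k} := Fintype.ofFinite _
  rw [← Nat.card_congr (Equiv.sigmaFiberEquiv f), Nat.card_sigma, Nat.cast_sum,
    Finset.sum_congr rfl fun U _ => hfib U, Finset.sum_const, nsmul_eq_mul, Finset.card_univ,
    ← Nat.card_eq_fintype_card] at htot
  have hpow : ∀ {n i : ℕ}, i ≤ n → (Fintype.card F : ℚ) ^ n - (Fintype.card F : ℚ) ^ i =
      (Fintype.card F : ℚ) ^ i * ((Fintype.card F : ℚ) ^ (n - i) - 1) := fun {n i} h => by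
    rw [mul_sub, ← pow_add, Nat.add_sub_cancel' h, mul_one]
  have hne : ∏ i ∈ Finset.range k,
      ((Fintype.card F : ℚ) ^ k - (Fintype.card F : ℚ) ^ i) ≠ 0 :=
    Finset.prod_ne_zero_iff.2 fun i hi =>
      (sub_pos.2 (pow_lt_pow_right₀ hq (Finset.mem_range.1 hi))).ne'
  rw [eq_div_of_mul_eq hne htot, gaussBinom, if_pos hk, ← Finset.prod_div_distrib]
  refine Finset.prod_congr rfl fun i hi => ?_
  have hi := (Finset.mem_range.1 hi).le
  rw [hpow hi, hpow (hi.trans hk), mul_div_mul_left _ _ (pow_pos (by linarith) i).ne']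

theorem sum_submodule_le (V : Submodule F E) (γ : ℕ → ℚ) [Fintype (Submodule F E)]
    [DecidablePred fun U => U ≤ V] :
    ∑ U : Submodule F E with U ≤ V, γ (finrank F U) =
      ∑ k ∈ Finset.range (finrank F V + 1),
        gaussBinom (Fintype.card F) (finrank F V) k * γ k := by
  rw [← Finset.sum_fiberwise_of_maps_to (g := fun U : Submodule F E => finrank F U)
    (t := Finset.range (finrank F V + 1))]
  · refine Finset.sum_congr rfl fun k _ => ?_
    rw [Finset.sum_congr rfl (g := fun _ => γ k) fun U hU => by rw [(Finset.mem_filter.1 hU).2],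
      Finset.sum_const, nsmul_eq_mul, Finset.filter_filter, ← natCard_submodule_le_finrank_eq,
      Nat.card_eq_fintype_card, Fintype.card_subtype]
  · intro U hU
    exact Finset.mem_range_succ_iff.2 (Submodule.finrank_mono (Finset.mem_filter.1 hU).2)

/-- If the number of elements of `S` whose associated subspace lies in `V` depends only on the
dimension of `V`, then so does the number of elements whose associated subspace is `V`. -/
theorem natCard_eq_gaussInverse {α : Type*} [Finite α] (f : α → Submodule F E) (φ : ℕ → ℚ)
    (h : ∀ V : Submodule F E, (Nat.card {a // f a ≤ V} : ℚ) = φ (finrank F V))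
    (V : Submodule F E) :
    (Nat.card {a // f a = V} : ℚ) = gaussInverse (Fintype.card F) φ (finrank F V) := by
  classical
  have : Fintype α := Fintype.ofFinite α
  have : Fintype (Submodule F E) := Fintype.ofFinite _
  have hq : (1 : ℚ) < Fintype.card F := by exact_mod_cast Fintype.one_lt_card
  induction V using WellFoundedLT.induction with
  | ind V ih =>
    have h1 : ∑ U : Submodule F E with U ≤ V, (Nat.card {a // f a = U} : ℚ) =
        φ (finrank F V) := by
      rw [← h V]
      simp_rw [Nat.card_eq_fintype_card, Fintype.card_subtype]
      rw [Finset.card_eq_sum_card_fiberwise (f := f)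
        (t := Finset.univ.filter fun U : Submodule F E => U ≤ V), Nat.cast_sum]
      · refine Finset.sum_congr rfl fun U hU => ?_
        rw [Finset.filter_filter]
        congr 2
        ext a
        simp only [Finset.mem_filter, Finset.mem_univ, true_and] at hU ⊢
        exact ⟨fun ha => ⟨ha ▸ hU, ha⟩, fun ha => ha.2⟩
      · intro a ha
        simpa using ha
    have h2 := sum_submodule_le V (gaussInverse (Fintype.card F) φ)
    rw [sum_gaussBinom_mul_gaussInverse hq, ← h1] at h2
    have hV : V ∈ Finset.univ.filter fun U : Submodule F E => U ≤ V := by simp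
    rw [← Finset.add_sum_erase _ _ hV, ← Finset.add_sum_erase _ _ hV] at h2
    rw [Finset.sum_congr rfl (g := fun U : Submodule F E => (Nat.card {a // f a = U} : ℚ))
      fun U hU => (ih U ?_).symm] at h2
    · exact (add_right_cancel h2).symm
    · simp only [Finset.mem_erase, Finset.mem_filter, Finset.mem_univ, true_and] at hU
      exact lt_of_le_of_ne hU.2 hU.1

theorem natCard_finrank_eq_gaussInverse {α : Type*} [Finite α] (f : α → Submodule F E)
    (φ : ℕ → ℚ)
    (h : ∀ V : Submodule F E, (Nat.card {a // f a ≤ V} : ℚ) = φ (finrank F V)) (r : ℕ) :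
    (Nat.card {a // finrank F (f a) = r} : ℚ) =
      gaussBinom (Fintype.card F) (finrank F E) r * gaussInverse (Fintype.card F) φ r := by
  classical
  have : Fintype α := Fintype.ofFinite α
  have : Fintype (Submodule F E) := Fintype.ofFinite _
  have hN := natCard_submodule_le_finrank_eq (⊤ : Submodule F E) r
  rw [finrank_top] at hN
  rw [← hN]
  simp_rw [Nat.card_eq_fintype_card, Fintype.card_subtype, le_top, true_and]
  rw [Finset.card_eq_sum_card_fiberwise (f := f)
    (t := Finset.univ.filter fun U : Submodule F E => finrank F U = r), Nat.cast_sum,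
    ← nsmul_eq_mul, ← Finset.sum_const]
  · refine Finset.sum_congr rfl fun U hU => ?_
    have hU : finrank F U = r := by simpa using hU
    rw [← hU, ← natCard_eq_gaussInverse f φ h U, Nat.card_eq_fintype_card, Fintype.card_subtype,
      Finset.filter_filter]
    congr 2
    ext a
    simp only [Finset.mem_filter, Finset.mem_univ, true_and]
    exact ⟨fun ha => ha.2, fun ha => ⟨ha ▸ rfl, ha⟩⟩
  · intro a ha
    simpa using ha

end Subspaces

section RowSpace

variable {F : Type*} [Field F] {m n : ℕ}

/-- The row space of a matrix. -/
def rowSpace (A : Matrix (Fin m) (Fin n) F) : Submodule F (Fin n → F) :=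
  Submodule.span F (Set.range A.row)

/-- The matrices all of whose rows lie in `W`. -/
def rowsIn (m : ℕ) (W : Submodule F (Fin n → F)) : Submodule F (Matrix (Fin m) (Fin n) F) where
  carrier := {A | ∀ i, A i ∈ W}
  add_mem' := fun ha hb i => W.add_mem (ha i) (hb i)
  zero_mem' := fun _ => W.zero_mem
  smul_mem' := fun c _ ha i => W.smul_mem c (ha i)

theorem mem_rowsIn_iff {A : Matrix (Fin m) (Fin n) F} {W : Submodule F (Fin n → F)} :
    A ∈ rowsIn m W ↔ rowSpace A ≤ W := by
  rw [rowSpace, Submodule.span_le, Set.range_subset_iff]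
  rfl

theorem finrank_rowSpace (A : Matrix (Fin m) (Fin n) F) : finrank F (rowSpace A) = A.rank :=
  A.rank_eq_finrank_span_row.symm

theorem finrank_rowsIn (W : Submodule F (Fin n → F)) :
    finrank F (rowsIn m W) = m * finrank F W := by
  let e : rowsIn m W ≃ₗ[F] (Fin m → W) :=
    { toFun := fun A i => ⟨A.1 i, A.2 i⟩
      invFun := fun g => ⟨fun i => (g i).1, fun i => (g i).2⟩
      map_add' := fun _ _ => rfl
      map_smul' := fun _ _ => rfl
      left_inv := fun _ => rfl
      right_inv := fun _ => rfl }
  rw [e.finrank_eq, finrank_pi_fintype]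
  simp

theorem exists_submodule_le_finrank_eq (W : Submodule F (Fin n → F)) {k : ℕ}
    (hk : k ≤ finrank F W) : ∃ U ≤ W, finrank F U = k := by
  obtain ⟨f, hf⟩ := exists_linearIndependent_of_le_finrank hk
  refine ⟨Submodule.span F (Set.range fun i => (f i : Fin n → F)),
    Submodule.span_le.2 (Set.range_subset_iff.2 fun i => (f i).2), ?_⟩
  exact (finrank_span_eq_card (hf.map' W.subtype W.ker_subtype)).trans (Fintype.card_fin k)

theorem finrank_inf_rowsIn {d : ℕ} (hd : 1 ≤ d) (hnd : d ≤ n)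
    (C : Submodule F (Matrix (Fin m) (Fin n) F))
    (hdist : ∀ A ∈ C, A ≠ 0 → d ≤ A.rank) (hC : finrank F C = m * (n - d + 1))
    (W : Submodule F (Fin n → F)) :
    finrank F (C ⊓ rowsIn m W : Submodule F (Matrix (Fin m) (Fin n) F)) =
      m * (finrank F W + 1 - d) := by
  have hdisj : ∀ U : Submodule F (Fin n → F), finrank F U < d → C ⊓ rowsIn m U = ⊥ := by
    refine fun U hU => (Submodule.eq_bot_iff _).2 fun A hA => ?_
    by_contra h0
    have h1 := hdist A hA.1 h0
    have h2 := Submodule.finrank_mono (mem_rowsIn_iff.1 hA.2)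
    rw [finrank_rowSpace] at h2
    omega
  rcases lt_or_ge (finrank F W) d with hW | hW
  · rw [hdisj W hW, finrank_bot, show finrank F W + 1 - d = 0 by omega, mul_zero]
  have hWn : finrank F W ≤ n := by simpa using W.finrank_le
  obtain ⟨U, hUW, hU⟩ := exists_submodule_le_finrank_eq W (k := d - 1) (by omega)
  have hlow := Submodule.finrank_sup_add_finrank_inf_eq C (rowsIn m W)
  have htop := (C ⊔ rowsIn m W).finrank_le
  rw [finrank_matrix] at htop
  simp only [Fintype.card_fin, finrank_self, mul_one] at htop
  have hup := Submodule.finrank_sup_add_finrank_inf_eq (C ⊓ rowsIn m W) (rowsIn m U)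
  have hle : rowsIn m U ≤ rowsIn m W := fun A hA i => hUW (hA i)
  have hbot : C ⊓ rowsIn m W ⊓ rowsIn m U = ⊥ := by
    rw [inf_assoc, inf_eq_right.2 hle, hdisj U (by omega)]
  have hsup := Submodule.finrank_mono
    (show C ⊓ rowsIn m W ⊔ rowsIn m U ≤ rowsIn m W from sup_le inf_le_right hle)
  rw [hbot, finrank_bot, finrank_rowsIn, hU] at hup
  rw [finrank_rowsIn] at hsup hlow
  rw [hC] at hlow
  obtain ⟨a, ha⟩ := Nat.exists_eq_add_of_le hW
  obtain ⟨b, hb⟩ := Nat.exists_eq_add_of_le hWn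
  obtain ⟨c, rfl⟩ := Nat.exists_eq_add_of_le' hd
  rw [show n - (c + 1) + 1 = a + b + 1 by omega] at hlow
  rw [show finrank F W + 1 - (c + 1) = a + 1 by omega]
  rw [show c + 1 - 1 = c by omega] at hup
  have hmul : m * n = m * (finrank F W + b) := congrArg _ hb
  rw [ha] at hlow hsup hmul
  simp only [mul_add, mul_one] at hlow hsup hmul hup ⊢
  omega

end RowSpace

/-- **Delsarte's theorem** on the rank distribution of linear MRD codes: if
`C ⊆ F_q^{m×n}` (with `m ≥ n ≥ d ≥ 1`) is a linear code in which every nonzero codeword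
has rank at least `d` and `|C| = q^{m(n−d+1)}`, then for every `d ≤ r ≤ n` the number of
codewords of rank exactly `r` equals
`[n choose r]_q · Σ_{i=0}^{r−d} (−1)^i q^{i(i−1)/2} [r choose i]_q (q^{m(r−d+1−i)} − 1)`. -/
theorem delsarte_rank_distribution (q m n d : ℕ) (hq : IsPrimePow q)
    (hmn : n ≤ m) (hnd : d ≤ n) (hd : 1 ≤ d)
    (F : Type*) [Field F] [Fintype F] (hcard : Fintype.card F = q)
    (C : Submodule F (Matrix (Fin m) (Fin n) F))
    (hdist : ∀ A ∈ C, A ≠ 0 → d ≤ A.rank)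
    (hsize : Nat.card C = q ^ (m * (n - d + 1))) :
    ∀ r, d ≤ r → r ≤ n →
      (Nat.card {A : Matrix (Fin m) (Fin n) F // A ∈ C ∧ A.rank = r} : ℚ) =
        gaussBinom q n r *
          ∑ i ∈ Finset.range (r - d + 1),
            (-1 : ℚ) ^ i * (q : ℚ) ^ (i * (i - 1) / 2) * gaussBinom q r i *
              ((q : ℚ) ^ (m * (r - d + 1 - i)) - 1) := by
  classical
  intro r hdr hrn
  subst hcard
  have hC : finrank F C = m * (n - d + 1) := by
    rw [Module.natCard_eq_pow_finrank (K := F), Nat.card_eq_fintype_card] at hsize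
    exact Nat.pow_right_injective Fintype.one_lt_card hsize
  let φ : ℕ → ℚ := fun k => (Fintype.card F : ℚ) ^ (m * (k + 1 - d)) - 1
  let f : {A : Matrix (Fin m) (Fin n) F // A ∈ C ∧ A ≠ 0} → Submodule F (Fin n → F) :=
    fun A => rowSpace A.1
  have hf : ∀ V : Submodule F (Fin n → F), (Nat.card {a // f a ≤ V} : ℚ) = φ (finrank F V) := by
    intro V
    let D : Submodule F (Matrix (Fin m) (Fin n) F) := C ⊓ rowsIn m V
    have e : {a // f a ≤ V} ≃ {A : D // A ≠ 0} :=
      { toFun := fun a => ⟨⟨a.1.1, a.1.2.1, mem_rowsIn_iff.2 a.2⟩,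
          fun h => a.1.2.2 (congrArg Subtype.val h)⟩
        invFun := fun A => ⟨⟨A.1.1, A.1.2.1, fun h => A.2 (Subtype.ext h)⟩,
          mem_rowsIn_iff.1 A.1.2.2⟩
        left_inv := fun _ => rfl
        right_inv := fun _ => rfl }
    have : Fintype D := Fintype.ofFinite D
    have hD : Nat.card D = Fintype.card F ^ (m * (finrank F V + 1 - d)) := by
      rw [Module.natCard_eq_pow_finrank (K := F), Nat.card_eq_fintype_card,
        finrank_inf_rowsIn hd hnd C hdist hC V]
    rw [Nat.card_congr e, Nat.card_eq_fintype_card, Fintype.card_subtype_compl,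
      Fintype.card_subtype_eq, ← Nat.card_eq_fintype_card, hD,
      Nat.cast_sub (Nat.one_le_pow _ _ Fintype.card_pos)]
    simp [φ]
  have e : {A : Matrix (Fin m) (Fin n) F // A ∈ C ∧ A.rank = r} ≃
      {a // finrank F (f a) = r} :=
    { toFun := fun A => ⟨⟨A.1, A.2.1, fun h => by
          have h1 := A.2.2
          rw [h, Matrix.rank_zero] at h1
          omega⟩, (finrank_rowSpace A.1).trans A.2.2⟩
      invFun := fun a => ⟨a.1.1, a.1.2.1, (finrank_rowSpace a.1.1).symm.trans a.2⟩
      left_inv := fun _ => rfl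
      right_inv := fun _ => rfl }
  rw [Nat.card_congr e, natCard_finrank_eq_gaussInverse f φ hf r, finrank_fin_fun, gaussInverse]
  congr 1
  symm
  apply Finset.sum_subset_zero_on_sdiff
  · exact Finset.range_subset_range.2 (by omega)
  · intro i hi
    simp only [Finset.mem_sdiff, Finset.mem_range] at hi
    simp [φ, show r - i + 1 - d = 0 by omega]
  · intro i hi
    simp only [Finset.mem_range] at hi
    rw [Nat.choose_two_right]
    simp [φ, show r - d + 1 - i = r - i + 1 - d by omega]
end

section
/- Let q be a prime power, d an even positive integer with d/2 ≤ k, and n1, n2, t integers with n1 ≥ k, n2 ≥ k, and 0 ≤ t ≤ min{n1 − k, n2 − k}. Then A_q(n1 + n2, d, k) ≥ q^{n1·(k − d/2 + 1)} · A_q(n2, d, k) + A_q(n1 − t, d, k) · Λ(q, k, n2 + t, d/2, k − d/2), where Λ(q, m, n, δ, u) denotes the maximum size of a set of matrices in F_q^{m×n} with pairwise rank distance at least δ in which every element has rank at most u. -/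
open Module

/-- The subspace distance `d_S(U, W) = dim(U + W) − dim(U ∩ W)`. -/
noncomputable def subspaceDist {F : Type*} [Field F] {n : ℕ}
    (U W : Submodule F (Fin n → F)) : ℕ :=
  finrank F ↥(U ⊔ W) - finrank F ↥(U ⊓ W)

/-- `A_q(n, d, k)`: the maximum size of an `(n, M, d, k)_q` constant dimension code, i.e.
of a set of `k`-dimensional subspaces of `F_q^n` with pairwise subspace distance
at least `d`. -/
noncomputable def maxCDCSize (F : Type*) [Field F] [Fintype F] (n d k : ℕ) : ℕ :=
  sSup {M | ∃ C : Finset (Submodule F (Fin n → F)), C.card = M ∧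
    (∀ U ∈ C, finrank F ↥U = k) ∧
    ∀ U ∈ C, ∀ W ∈ C, U ≠ W → d ≤ subspaceDist U W}

/-- `Λ(q, m, n, δ, u)`: the maximum size of a rank-restricted rank-metric code, i.e. of a
set of matrices in `F_q^{m×n}` with pairwise rank distance at least `δ` in which every
element has rank at most `u`. -/
noncomputable def maxRRMCSize (F : Type*) [Field F] [Fintype F] (m n δ u : ℕ) : ℕ :=
  sSup {N | ∃ Q : Finset (Matrix (Fin m) (Fin n) F), Q.card = N ∧
    (∀ A ∈ Q, ∀ B ∈ Q, A ≠ B → δ ≤ (A - B).rank) ∧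
    ∀ A ∈ Q, A.rank ≤ u}

section IntersectionDimension

variable {F E V B : Type*} [Field F] [AddCommGroup E] [Module F E]
  [AddCommGroup V] [Module F V] [AddCommGroup B] [Module F B]

theorem finrank_range_inf_le_of_injective_comp [FiniteDimensional F B]
    (p : V →ₗ[F] B) (s : E →ₗ[F] V) (hinj : Function.Injective (p ∘ₗ s)) (T : Submodule F V) :
    finrank F ↥(LinearMap.range s ⊓ T) ≤
      finrank F ↥(LinearMap.range (p ∘ₗ s) ⊓ T.map p) := by
  have hres : Function.Injective (p.domRestrict (LinearMap.range s ⊓ T)) := by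
    rintro ⟨_, ⟨x, rfl⟩, _⟩ ⟨_, ⟨y, rfl⟩, _⟩ h
    have hxy : x = y := hinj h
    subst hxy
    rfl
  rw [← LinearMap.finrank_range_of_inj hres]
  refine Submodule.finrank_mono ?_
  rintro _ ⟨⟨_, ⟨x, rfl⟩, hx⟩, rfl⟩
  exact ⟨⟨x, rfl⟩, ⟨s x, hx, rfl⟩⟩

theorem finrank_range_inf_range_le [FiniteDimensional F E]
    (p : V →ₗ[F] B) (s t : E →ₗ[F] V) (hst : p ∘ₗ s = p ∘ₗ t)
    (hinj : Function.Injective (p ∘ₗ s)) :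
    finrank F ↥(LinearMap.range s ⊓ LinearMap.range t) ≤
      finrank F ↥(LinearMap.ker (s - t)) := by
  have hle : LinearMap.range s ⊓ LinearMap.range t ≤ (LinearMap.ker (s - t)).map s := by
    rintro _ ⟨⟨x, rfl⟩, ⟨y, hy⟩⟩
    have hxy : y = x := hinj (by
      rw [hst, LinearMap.comp_apply, hy, ← LinearMap.comp_apply, hst])
    subst hxy
    exact ⟨y, by simp [hy], rfl⟩
  exact (Submodule.finrank_mono hle).trans (Submodule.finrank_map_le s _)

/-- Subspaces obtained by combining a constant dimension code, given by injective maps `g i`, with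
a rank-metric code `f j` again form a constant dimension code. -/
theorem finrank_range_inf_range_add_le_of_product {D ι κ : Type*} [AddCommGroup D] [Module F D]
    [FiniteDimensional F E] [FiniteDimensional F B] (p : V →ₗ[F] B) (q : V →ₗ[F] D)
    {g : ι → E →ₗ[F] B} {f : κ → E →ₗ[F] D} {s : ι × κ → E →ₗ[F] V}
    (hp : ∀ x, p ∘ₗ s x = g x.1) (hq : ∀ x, q ∘ₗ s x = f x.2)
    (hg : ∀ i, Function.Injective (g i)) {δ k : ℕ}
    (hgd : ∀ i j, i ≠ j →
      finrank F ↥(LinearMap.range (g i) ⊓ LinearMap.range (g j)) + δ ≤ k)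
    (hfd : ∀ i j, i ≠ j → finrank F (LinearMap.ker (f i - f j)) + δ ≤ k)
    (x y : ι × κ) (hxy : x ≠ y) :
    finrank F ↥(LinearMap.range (s x) ⊓ LinearMap.range (s y)) + δ ≤ k := by
  have hinj : Function.Injective (p ∘ₗ s x) := hp x ▸ hg x.1
  by_cases h : x.1 = y.1
  · have hker : LinearMap.ker (s x - s y) ≤ LinearMap.ker (f x.2 - f y.2) := by
      rw [← hq, ← hq, ← LinearMap.comp_sub]
      exact LinearMap.ker_le_ker_comp _ _
    have hle := finrank_range_inf_range_le p (s x) (s y) (by rw [hp, hp, h]) hinj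
    have hmono := Submodule.finrank_mono hker
    have hd := hfd x.2 y.2 fun h₂ ↦ hxy (Prod.ext h h₂)
    omega
  · have hle := finrank_range_inf_le_of_injective_comp p (s x) hinj (LinearMap.range (s y))
    rw [← LinearMap.range_comp, hp, hp] at hle
    have hd := hgd x.1 y.1 h
    omega

theorem Submodule.exists_injective_range_eq [FiniteDimensional F E] [FiniteDimensional F V]
    (U : Submodule F V) (h : finrank F U = finrank F E) :
    ∃ g : E →ₗ[F] V, Function.Injective g ∧ LinearMap.range g = U := by
  let e : E ≃ₗ[F] U := LinearEquiv.ofFinrankEq E U h.symm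
  refine ⟨U.subtype ∘ₗ e.toLinearMap, U.injective_subtype.comp e.injective, ?_⟩
  rw [LinearMap.range_comp, LinearEquiv.range, Submodule.map_top, Submodule.range_subtype]

end IntersectionDimension

section ConstantDimensionCodes

variable {F : Type*} [Field F]

theorem two_mul_le_subspaceDist_iff {n k δ : ℕ} (U W : Submodule F (Fin n → F))
    (hU : finrank F U = k) (hW : finrank F W = k) :
    2 * δ ≤ subspaceDist U W ↔ finrank F ↥(U ⊓ W) + δ ≤ k := by
  have h := Submodule.finrank_sup_add_finrank_inf_eq U W
  have hle : finrank F ↥(U ⊓ W) ≤ finrank F U := Submodule.finrank_mono inf_le_left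
  unfold subspaceDist
  omega

variable [Fintype F]

theorem exists_card_eq_maxCDCSize (F : Type*) [Field F] [Fintype F] (n k δ : ℕ) :
    ∃ C : Finset (Submodule F (Fin n → F)), C.card = maxCDCSize F n (2 * δ) k ∧
      (∀ U ∈ C, finrank F U = k) ∧
      ∀ U ∈ C, ∀ W ∈ C, U ≠ W → finrank F ↥(U ⊓ W) + δ ≤ k := by
  have := Fintype.ofFinite (Submodule F (Fin n → F))
  obtain ⟨C, hcard, hdim, hdist⟩ := Nat.sSup_mem
    (s := {M | ∃ C : Finset (Submodule F (Fin n → F)), C.card = M ∧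
      (∀ U ∈ C, finrank F ↥U = k) ∧
      ∀ U ∈ C, ∀ W ∈ C, U ≠ W → 2 * δ ≤ subspaceDist U W})
    ⟨0, ∅, by simp⟩ ⟨_, by rintro _ ⟨C, rfl, -⟩; exact C.card_le_univ⟩
  exact ⟨C, hcard, hdim, fun U hU W hW hne ↦
    (two_mul_le_subspaceDist_iff U W (hdim U hU) (hdim W hW)).mp (hdist U hU W hW hne)⟩

theorem card_le_maxCDCSize {V ι : Type*} [AddCommGroup V] [Module F V] [FiniteDimensional F V]
    [Fintype ι] {n k δ : ℕ} (hn : finrank F V = n) (hδ : 0 < δ) (S : ι → Submodule F V)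
    (hdim : ∀ i, finrank F (S i) = k)
    (hinf : ∀ i j, i ≠ j → finrank F ↥(S i ⊓ S j) + δ ≤ k) :
    Fintype.card ι ≤ maxCDCSize F n (2 * δ) k := by
  classical
  have := Fintype.ofFinite (Submodule F (Fin n → F))
  let e : V ≃ₗ[F] (Fin n → F) := LinearEquiv.ofFinrankEq _ _ (by simpa using hn)
  let T : ι → Submodule F (Fin n → F) := fun i ↦ (S i).map e.toLinearMap
  have hTdim (i) : finrank F (T i) = k := by
    rw [← hdim i]; exact LinearEquiv.finrank_map_eq e (S i)
  have hTinf (i j) (h : i ≠ j) : finrank F ↥(T i ⊓ T j) + δ ≤ k := by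
    have heq : T i ⊓ T j = (S i ⊓ S j).map e.toLinearMap :=
      (Submodule.map_inf e.toLinearMap e.injective).symm
    rw [heq]
    exact (LinearEquiv.finrank_map_eq e (S i ⊓ S j)).symm ▸ hinf i j h
  have hT : Function.Injective T := by
    intro i j hij
    by_contra hne
    have h := hTinf i j hne
    rw [hij, inf_idem, hTdim] at h
    omega
  refine le_csSup ⟨Fintype.card (Submodule F (Fin n → F)), ?_⟩
    ⟨Finset.univ.image T, ?_, ?_, ?_⟩
  · rintro _ ⟨C, rfl, -⟩
    exact C.card_le_univ
  · rw [Finset.card_image_of_injective _ hT, Finset.card_univ]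
  · simpa using hTdim
  · simp only [Finset.mem_image, Finset.mem_univ, true_and]
    rintro _ ⟨i, rfl⟩ _ ⟨j, rfl⟩ hne
    exact (two_mul_le_subspaceDist_iff _ _ (hTdim i) (hTdim j)).mpr
      (hTinf i j fun h ↦ hne (h ▸ rfl))

end ConstantDimensionCodes

section RankMetricCodes

variable {F : Type*} [Field F] [Fintype F]

theorem exists_linearMap_card_eq_maxRRMCSize {E W : Type*} [AddCommGroup E] [Module F E]
    [FiniteDimensional F E] [AddCommGroup W] [Module F W] [FiniteDimensional F W] {m n : ℕ}
    (hm : finrank F E = m) (hn : finrank F W = n) (δ u : ℕ) :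
    ∃ f : Fin (maxRRMCSize F m n δ u) → E →ₗ[F] W,
      (∀ i j, i ≠ j → δ ≤ finrank F (LinearMap.range (f i - f j))) ∧
      ∀ i, finrank F (LinearMap.range (f i)) ≤ u := by
  classical
  obtain ⟨Q, hcard, hdist, hrank⟩ := Nat.sSup_mem
    (s := {N | ∃ Q : Finset (Matrix (Fin m) (Fin n) F), Q.card = N ∧
      (∀ A ∈ Q, ∀ B ∈ Q, A ≠ B → δ ≤ (A - B).rank) ∧ ∀ A ∈ Q, A.rank ≤ u})
    ⟨0, ∅, by simp⟩ ⟨_, by rintro _ ⟨C, rfl, -⟩; exact C.card_le_univ⟩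
  let e : (Fin n → F) ≃ₗ[F] W := LinearEquiv.ofFinrankEq _ _ (by simpa using hn.symm)
  let e' : E ≃ₗ[F] (Fin m → F) := LinearEquiv.ofFinrankEq _ _ (by simpa using hm)
  let L (A : Matrix (Fin m) (Fin n) F) : E →ₗ[F] W :=
    e.toLinearMap ∘ₗ Matrix.toLin' A.transpose ∘ₗ e'.toLinearMap
  have hL (A) : finrank F (LinearMap.range (L A)) = A.rank := by
    rw [← A.rank_transpose, Matrix.rank, ← Matrix.toLin'_apply', LinearMap.range_comp,
      LinearMap.range_comp_of_range_eq_top _ e'.range]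
    exact LinearEquiv.finrank_map_eq e _
  have hsub (A B) : L A - L B = L (A - B) := by
    simp [L, Matrix.transpose_sub, LinearMap.comp_sub, LinearMap.sub_comp]
  let c : Fin (maxRRMCSize F m n δ u) ≃ Q := (Q.equivFinOfCardEq hcard).symm
  refine ⟨fun i ↦ L (c i), fun i j hij ↦ ?_, fun i ↦ ?_⟩
  · rw [hsub, hL]
    exact hdist _ (c i).2 _ (c j).2 fun h ↦ hij (c.injective (Subtype.ext h))
  · rw [hL]
    exact hrank _ (c i).2

open Polynomial in
/-- A nonzero linearized polynomial of `q`-degree less than `r` has at most `q ^ (r - 1)` roots. -/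
theorem card_roots_linearized_le {L : Type*} [Field L] [Fintype L] {q r : ℕ} (hq : 1 < q)
    (a : Fin r → L) (ha : a ≠ 0) (S : Finset L)
    (hS : ∀ x ∈ S, ∑ i, a i * x ^ q ^ (i : ℕ) = 0) : S.card ≤ q ^ (r - 1) := by
  classical
  let P : L[X] := ∑ i, C (a i) * X ^ q ^ (i : ℕ)
  have hP : P ≠ 0 := by
    obtain ⟨j, hj⟩ := Function.ne_iff.mp ha
    intro h0
    apply hj
    have hc := congrArg (fun p ↦ p.coeff (q ^ (j : ℕ))) h0
    simpa [P, finsetSum_coeff, coeff_C_mul, coeff_X_pow, Nat.pow_right_inj hq,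
      Fin.val_inj, eq_comm] using hc
  have hdeg : P.natDegree ≤ q ^ (r - 1) := by
    refine natDegree_sum_le_of_forall_le _ _ fun i _ ↦ ?_
    exact (natDegree_C_mul_X_pow_le _ _).trans (Nat.pow_le_pow_right hq.le (by omega))
  refine (card_le_degree_of_subset_roots fun x hx ↦ ?_).trans hdeg
  rw [mem_roots hP, IsRoot.def, ← hS x hx]
  simp [P, eval_finsetSum]

/-- Gabidulin codes: for `1 ≤ r` and `k ≤ n` there are `q ^ (n * r)` linear maps from a space of
dimension `k` to one of dimension `n`, any two of which agree on a space of dimension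
less than `r`. -/
theorem exists_maxRankDistanceCode {E W : Type*} [AddCommGroup E] [Module F E]
    [FiniteDimensional F E] [AddCommGroup W] [Module F W] [FiniteDimensional F W]
    (hW : 0 < finrank F W) (hEW : finrank F E ≤ finrank F W) {r : ℕ} (hr : 0 < r) :
    ∃ f : Fin (Fintype.card F ^ (finrank F W * r)) → E →ₗ[F] W,
      ∀ i j, i ≠ j → finrank F (LinearMap.ker (f i - f j)) < r := by
  classical
  set n := finrank F W with hn
  have : NeZero n := ⟨hW.ne'⟩
  obtain ⟨p, hp⟩ := CharP.exists F
  have : Fact p.Prime := ⟨CharP.char_is_prime F p⟩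
  let L := FiniteField.Extension F p n
  have hL : finrank F L = n := FiniteField.finrank_extension F p n
  have : Fintype L := Fintype.ofFinite L
  let e : L ≃ₗ[F] W := LinearEquiv.ofFinrankEq _ _ hL
  obtain ⟨g, hg⟩ : ∃ g : E →ₗ[F] L, Function.Injective g := by
    rw [← hL] at hEW
    exact finrank_le_iff_exists_linearMap.mp hEW
  let f (a : Fin r → L) : E →ₗ[F] L :=
    (∑ i, LinearMap.mulLeft F (a i) ∘ₗ ((FiniteField.frobeniusAlgHom F L) ^ (i : ℕ)).toLinearMap)
      ∘ₗ g
  have hf (a x) : f a x = ∑ i, a i * g x ^ Fintype.card F ^ (i : ℕ) := by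
    simp [f, AlgHom.coe_pow, FiniteField.coe_frobeniusAlgHom, pow_iterate]
  have hcard : Fintype.card (Fin r → L) = Fintype.card F ^ (n * r) := by
    rw [Fintype.card_fun, Fintype.card_fin, Module.card_eq_pow_finrank (K := F) (V := L), hL,
      pow_mul]
  let c := (Fintype.equivFinOfCardEq hcard).symm
  refine ⟨fun i ↦ e.toLinearMap ∘ₗ f (c i), fun i j hij ↦ ?_⟩
  set K := LinearMap.ker (e.toLinearMap ∘ₗ f (c i) - e.toLinearMap ∘ₗ f (c j))
  have : Finite E := Module.finite_of_finite F
  have : Fintype K := Fintype.ofFinite K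
  have hroots := card_roots_linearized_le (Fintype.one_lt_card (α := F)) (c i - c j)
    (sub_ne_zero.mpr fun h ↦ hij (c.injective h))
    (Finset.univ.image (g ∘ Subtype.val : K → L)) (by
      simp only [Finset.mem_image, Finset.mem_univ, true_and]
      rintro _ ⟨⟨x, hx⟩, rfl⟩
      have hx : f (c i) x = f (c j) x := by
        apply e.injective
        simpa [K, sub_eq_zero] using hx
      simpa [sub_mul, sub_eq_zero, hf] using hx)
  rw [Finset.card_image_of_injective _ (hg.comp Subtype.val_injective), Finset.card_univ,
    Module.card_eq_pow_finrank (K := F) (V := K)] at hroots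
  have := (Nat.pow_le_pow_iff_right (Fintype.one_lt_card (α := F))).mp hroots
  omega

end RankMetricCodes

/-- For `d` even positive with `d/2 ≤ k`, `n1 ≥ k`, `n2 ≥ k`, `0 ≤ t ≤ min{n1−k, n2−k}`:
`A_q(n1+n2, d, k) ≥ q^{n1(k−d/2+1)}·A_q(n2, d, k) + A_q(n1−t, d, k)·Λ(q, k, n2+t, d/2, k−d/2)`. -/
theorem linkage_lower_bound_with_RRMC (q d k n1 n2 t : ℕ) (hq : IsPrimePow q)
    (hd : 0 < d) (hdeven : Even d) (hdk : d / 2 ≤ k)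
    (hn1 : k ≤ n1) (hn2 : k ≤ n2) (ht : t ≤ min (n1 - k) (n2 - k))
    (F : Type*) [Field F] [Fintype F] (hcard : Fintype.card F = q) :
    q ^ (n1 * (k - d / 2 + 1)) * maxCDCSize F n2 d k +
        maxCDCSize F (n1 - t) d k * maxRRMCSize F k (n2 + t) (d / 2) (k - d / 2) ≤
      maxCDCSize F (n1 + n2) d k := by
  obtain ⟨δ, rfl⟩ := hdeven.two_dvd
  subst hcard
  rw [Nat.mul_div_cancel_left δ two_pos] at hdk ⊢
  have hδ : 0 < δ := by omega
  have htn1 : t ≤ n1 - k := ht.trans (min_le_left _ _)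
  let E := Fin k → F
  let A := Fin (n1 - t) → F
  let T := Fin t → F
  let B := Fin n2 → F
  have hE : finrank F E = k := by simp [E]
  have hAT : finrank F (A × T) = n1 := by simp [A, T]; omega
  have hTB : finrank F (T × B) = n2 + t := by simp [T, B, add_comm]
  have hV : finrank F (A × T × B) = n1 + n2 := by simp [A, T, B]; omega
  obtain ⟨C₂, hC₂card, hC₂dim, hC₂inf⟩ := exists_card_eq_maxCDCSize F n2 k δ
  obtain ⟨C₁, hC₁card, hC₁dim, hC₁inf⟩ := exists_card_eq_maxCDCSize F (n1 - t) k δ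
  obtain ⟨Q, hQdist, hQrank⟩ :=
    exists_linearMap_card_eq_maxRRMCSize hE hTB δ (k - δ)
  obtain ⟨M, hM⟩ := exists_maxRankDistanceCode (F := F) (E := E) (W := A × T)
    (r := k - δ + 1) (by omega) (by omega) (by omega)
  choose g₂ hg₂inj hg₂range using fun U : C₂ ↦
    Submodule.exists_injective_range_eq (E := E) U.1 ((hC₂dim U.1 U.2).trans hE.symm)
  choose g₁ hg₁inj hg₁range using fun U : C₁ ↦
    Submodule.exists_injective_range_eq (E := E) U.1 ((hC₁dim U.1 U.2).trans hE.symm)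
  let s₂ (x : C₂ × Fin (Fintype.card F ^ (finrank F (A × T) * (k - δ + 1)))) :
      E →ₗ[F] A × T × B :=
    (LinearEquiv.prodAssoc F A T B).toLinearMap ∘ₗ (M x.2).prod (g₂ x.1)
  let s₁ (x : C₁ × Fin (maxRRMCSize F k (n2 + t) δ (k - δ))) : E →ₗ[F] A × T × B :=
    (g₁ x.1).prod (Q x.2)
  let pB : A × T × B →ₗ[F] B := LinearMap.snd F T B ∘ₗ LinearMap.snd F A (T × B)
  let pA : A × T × B →ₗ[F] A := LinearMap.fst F A (T × B)
  have hs₂inj (x) : Function.Injective (pB ∘ₗ s₂ x) := hg₂inj x.1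
  have hs₁inj (x) : Function.Injective (pA ∘ₗ s₁ x) := hg₁inj x.1
  have hd₂ := finrank_range_inf_range_add_le_of_product (s := s₂) (g := g₂) (f := M)
    (δ := δ) (k := k) pB
    (LinearMap.fst F (A × T) B ∘ₗ (LinearEquiv.prodAssoc F A T B).symm.toLinearMap)
    (fun _ ↦ rfl) (fun _ ↦ rfl) hg₂inj
    (fun i j hij ↦ by
      rw [hg₂range, hg₂range]
      exact hC₂inf _ i.2 _ j.2 fun h ↦ hij (Subtype.ext h))
    (fun i j hij ↦ by have := hM i j hij; omega)
  have hd₁ := finrank_range_inf_range_add_le_of_product (s := s₁) (g := g₁) (f := Q)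
    (δ := δ) (k := k) pA (LinearMap.snd F A (T × B))
    (fun _ ↦ rfl) (fun _ ↦ rfl) hg₁inj
    (fun i j hij ↦ by
      rw [hg₁range, hg₁range]
      exact hC₁inf _ i.2 _ j.2 fun h ↦ hij (Subtype.ext h))
    (fun i j hij ↦ by
      have := hQdist i j hij
      have := hE ▸ (Q i - Q j).finrank_range_add_finrank_ker
      omega)
  have hcross (x y) : finrank F ↥(LinearMap.range (s₂ x) ⊓ LinearMap.range (s₁ y)) + δ ≤ k := by
    have hle := finrank_range_inf_le_of_injective_comp pB (s₂ x) (hs₂inj x)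
      (LinearMap.range (s₁ y))
    have hmap : (LinearMap.range (s₁ y)).map pB =
        (LinearMap.range (Q y.2)).map (LinearMap.snd F T B) := by
      rw [← LinearMap.range_comp, ← LinearMap.range_comp]
      rfl
    have hmono := Submodule.finrank_mono (R := F)
      (inf_le_right : LinearMap.range (pB ∘ₗ s₂ x) ⊓ (LinearMap.range (s₁ y)).map pB ≤ _)
    rw [hmap] at hle hmono
    have hQ := Submodule.finrank_map_le (LinearMap.snd F T B) (LinearMap.range (Q y.2))
    have := hQrank y.2
    omega
  have hcode := card_le_maxCDCSize (k := k) hV hδ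
    (Sum.elim (fun x ↦ LinearMap.range (s₂ x)) fun y ↦ LinearMap.range (s₁ y))
    (by
      rintro (x | y)
      · exact (LinearMap.finrank_range_of_inj (.of_comp (f := pB) (hs₂inj x))).trans hE
      · exact (LinearMap.finrank_range_of_inj (.of_comp (f := pA) (hs₁inj y))).trans hE)
    (by
      rintro (x | x) (y | y) hne
      · exact hd₂ x y fun h ↦ hne (h ▸ rfl)
      · exact hcross x y
      · exact inf_comm (LinearMap.range (s₂ y)) (LinearMap.range (s₁ x)) ▸ hcross y x
      · exact hd₁ x y fun h ↦ hne (h ▸ rfl))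
  rw [Fintype.card_sum, Fintype.card_prod, Fintype.card_prod, Fintype.card_coe, Fintype.card_coe,
    Fintype.card_fin, Fintype.card_fin, hAT, hC₁card, hC₂card] at hcode
  rwa [mul_comm (_ ^ _)]
end
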